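/- For every partition λ ∈ P_n, the Schur polynomial satisfies the bialternant formula s_λ(x) = a_{ρ+λ}(x)/a_ρ(x); equivalently, a_ρ(x)·s_λ(x) = a_{ρ+λ}(x). -/

import Mathlib

open Finset MvPolynomial

attribute [local instance] Classical.propDecidable

/-- A partition in `P_n`: a weakly decreasing sequence of naturals. -/
def IsPartition {n : ℕ} (lam : Fin n → ℕ) : Prop := Antitone lam

/-- The cells of the Young diagram of `lam`, as pairs (row, column), 0-based. -/
noncomputable def cells {n : ℕ} (lam : Fin n → ℕ) : Finset (Fin n × ℕ) :=
  (Finset.univ ×ˢ Finset.range (Finset.univ.sup lam)).filter fun c => c.2 < lam c.1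

/-- Semistandardness for a filling with values in `Fin n` (0-based values):
rows weakly increase, columns strictly increase. -/
def IsSSYT {n : ℕ} (lam : Fin n → ℕ) (T : cells lam → Fin n) : Prop :=
  (∀ c d : cells lam, (c : Fin n × ℕ).1 = (d : Fin n × ℕ).1 →
      (c : Fin n × ℕ).2 ≤ (d : Fin n × ℕ).2 → T c ≤ T d) ∧
  (∀ c d : cells lam, (c : Fin n × ℕ).2 = (d : Fin n × ℕ).2 →
      (c : Fin n × ℕ).1 < (d : Fin n × ℕ).1 → T c < T d)

/-- The y-subscript `a + c(a) - r(a)` of a cell (1-based value and coordinates). -/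
def ysub {n : ℕ} (a : Fin n) (c : Fin n × ℕ) : ℤ := (a : ℤ) + 1 + (c.2 : ℤ) - ((c.1 : ℕ) : ℤ)

/-- The Schur polynomial `s_lam(x)`, in the ring with `x`-variables `Sum.inl i`
and `y`-variables `Sum.inr (i, k)` (family `i`, subscript `k`). -/
noncomputable def schur (n r : ℕ) (lam : Fin n → ℕ) :
    MvPolynomial (Fin n ⊕ Fin r × ℤ) ℤ :=
  ∑ T ∈ Finset.univ.filter (IsSSYT lam), ∏ c : cells lam, X (Sum.inl (T c))

/-- The factorial Schur polynomial `s_lam(x | y^{(i)})`. -/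
noncomputable def factSchur (n r : ℕ) (i : Fin r) (lam : Fin n → ℕ) :
    MvPolynomial (Fin n ⊕ Fin r × ℤ) ℤ :=
  ∑ T ∈ Finset.univ.filter (IsSSYT lam),
    ∏ c : cells lam,
      (X (Sum.inl (T c)) + X (Sum.inr (i, ysub (T c) (c : Fin n × ℕ))))

/-- A barred filling of a single Young diagram: an entry is a value in `Fin n`
(0-based) together with a `Bool` recording whether it is barred.  Rows weakly
increase and columns strictly increase in value, disregarding bars. -/
def IsBarred {n : ℕ} (lam : Fin n → ℕ) (T : cells lam → Fin n × Bool) : Prop :=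
  (∀ c d : cells lam, (c : Fin n × ℕ).1 = (d : Fin n × ℕ).1 →
      (c : Fin n × ℕ).2 ≤ (d : Fin n × ℕ).2 → (T c).1 ≤ (T d).1) ∧
  (∀ c d : cells lam, (c : Fin n × ℕ).2 = (d : Fin n × ℕ).2 →
      (c : Fin n × ℕ).1 < (d : Fin n × ℕ).1 → (T c).1 < (T d).1)

/-- A barred skew tableau of shape `λ̄ = (lam 0, …, lam (r-1))`: since consecutive
diagrams are placed strictly below and to the left of the preceding one, no two
diagrams share a row or a column, so such a tableau is exactly a tuple of barred
fillings of the individual diagrams. -/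
def IsBarredSkew {n r : ℕ} (lam : Fin r → Fin n → ℕ)
    (T : (i : Fin r) → cells (lam i) → Fin n × Bool) : Prop :=
  ∀ i, IsBarred (lam i) (T i)

/-- Unbarred content of a barred filling of one diagram. -/
noncomputable def content1 {n : ℕ} (lam : Fin n → ℕ) (T : cells lam → Fin n × Bool)
    (k : Fin n) : ℕ :=
  (Finset.univ.filter fun c : cells lam => T c = (k, false)).card

/-- Unbarred content `ω(T)` of a barred skew tableau. -/
noncomputable def contentT {n r : ℕ} (lam : Fin r → Fin n → ℕ)
    (T : (i : Fin r) → cells (lam i) → Fin n × Bool) (k : Fin n) : ℕ :=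
  ∑ i, content1 (lam i) (T i) k

/-- The monomial `c_T(y)` contributed by the barred entries of one diagram
(living in the ring of `y`-variables only). -/
noncomputable def cT1 {n : ℕ} (r : ℕ) (i : Fin r) (lam : Fin n → ℕ)
    (T : cells lam → Fin n × Bool) : MvPolynomial (Fin r × ℤ) ℤ :=
  ∏ c ∈ Finset.univ.filter (fun c : cells lam => (T c).2 = true),
    X (i, ysub (T c).1 (c : Fin n × ℕ))

/-- The monomial `c_T(y)` of a barred skew tableau. -/
noncomputable def cT {n r : ℕ} (lam : Fin r → Fin n → ℕ)
    (T : (i : Fin r) → cells (lam i) → Fin n × Bool) : MvPolynomial (Fin r × ℤ) ℤ :=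
  ∏ i, cT1 r i (lam i) (T i)

/-- The unbarred column word of a barred filling of one diagram: unbarred values
(0-based) read down each column, from the rightmost column to the leftmost. -/
noncomputable def colWord1 {n : ℕ} (lam : Fin n → ℕ)
    (T : cells lam → Fin n × Bool) : List ℕ :=
  ((List.range (Finset.univ.sup lam)).reverse).flatMap fun j =>
    (List.finRange n).filterMap fun i =>
      if h : (i, j) ∈ cells lam then
        (if (T ⟨(i, j), h⟩).2 = false then some ((T ⟨(i, j), h⟩).1 : ℕ) else none)
      else none

/-- The unbarred column word of a barred skew tableau: diagram `lam 0` is the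
rightmost, so its word comes first. -/
noncomputable def colWord {n r : ℕ} (lam : Fin r → Fin n → ℕ)
    (T : (i : Fin r) → cells (lam i) → Fin n × Bool) : List ℕ :=
  (List.finRange r).flatMap fun i => colWord1 (lam i) (T i)

/-- A word (with 0-based values) is Yamanouchi if every initial segment contains
at least as many `k`'s as `(k+1)`'s, for every `k`. -/
def IsYam (w : List ℕ) : Prop :=
  ∀ t k, ((w.take t).count (k + 1)) ≤ (w.take t).count k

/-- The alternant `a_ξ(x) = det[(x_i)^{ξ_j}]`. -/
noncomputable def avand (n r : ℕ) (xi : Fin n → ℕ) :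
    MvPolynomial (Fin n ⊕ Fin r × ℤ) ℤ :=
  Matrix.det (Matrix.of fun i j : Fin n =>
    (X (Sum.inl i) : MvPolynomial (Fin n ⊕ Fin r × ℤ) ℤ) ^ xi j)

/-- `ρ = (n-1, n-2, …, 0)`. -/
def rhoPart (n : ℕ) : Fin n → ℕ := fun i => n - 1 - (i : ℕ)

/-- The Schur polynomial in the `x`-variables only. -/
noncomputable def schurX (n : ℕ) (lam : Fin n → ℕ) : MvPolynomial (Fin n) ℤ :=
  ∑ T ∈ Finset.univ.filter (IsSSYT lam), ∏ c : cells lam, X (T c)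

/-- The alternant `a_ξ(x)` in the `x`-variables only. -/
noncomputable def avandX (n : ℕ) (xi : Fin n → ℕ) : MvPolynomial (Fin n) ℤ :=
  Matrix.det (Matrix.of fun i j : Fin n => (X i : MvPolynomial (Fin n) ℤ) ^ xi j)

def altD {R : Type*} [CommRing R] {n : ℕ} (x : Fin n → R) (lam : Fin n → ℕ) : R :=
  Matrix.det (Matrix.of fun i j : Fin n => x i ^ (rhoPart n j + lam j))

theorem geom_id {R : Type*} [CommRing R] (a y : R) (q p : ℕ) (h : q ≤ p) :
    a ^ (p + 1) - y ^ (p - q + 1) * a ^ q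
      = (a - y) * ∑ m ∈ Finset.Icc q p, y ^ (p - m) * a ^ m := by
  induction p, h using Nat.le_induction with
  | base => simp; ring
  | succ p hp ih =>
    rw [Finset.sum_Icc_succ_top (by omega), mul_add]
    have : ∑ m ∈ Finset.Icc q p, y ^ (p + 1 - m) * a ^ m
        = y * ∑ m ∈ Finset.Icc q p, y ^ (p - m) * a ^ m := by
      rw [Finset.mul_sum]
      refine Finset.sum_congr rfl fun m hm => ?_
      rw [Finset.mem_Icc] at hm
      rw [Nat.succ_sub hm.2, pow_succ]; ring
    rw [this, mul_left_comm, ← ih, Nat.succ_sub hp]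
    simp
    ring

theorem det_col_succ {R : Type*} [CommRing R] {n : ℕ} (A B : Matrix (Fin (n+1)) (Fin (n+1)) R)
    (c : Fin n → R) (h0 : ∀ i, A i (Fin.last n) = B i (Fin.last n))
    (h1 : ∀ i (j : Fin n), A i j.castSucc = B i j.castSucc + c j * A i j.succ) :
    A.det = B.det := by
  rw [← Matrix.det_submatrix_equiv_self Fin.revPerm A,
    ← Matrix.det_submatrix_equiv_self Fin.revPerm B]
  refine Matrix.det_eq_of_forall_col_eq_smul_add_pred (fun j => c j.rev) ?_ ?_
  · intro i; simp [h0]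
  · intro i j; simp [Fin.rev_succ, Fin.rev_castSucc, h1]

theorem det_last_row {R : Type*} [CommRing R] {n : ℕ} (B : Matrix (Fin (n+1)) (Fin (n+1)) R)
    (h : ∀ j : Fin n, B (Fin.last n) j.castSucc = 0) :
    B.det = B (Fin.last n) (Fin.last n) *
      Matrix.det (Matrix.of fun i j : Fin n => B i.castSucc j.castSucc) := by
  rw [Matrix.det_succ_row B (Fin.last n), Fin.sum_univ_castSucc]
  simp only [h, mul_zero, zero_mul, Finset.sum_const_zero, zero_add, Fin.succAbove_last]
  rw [← two_mul, pow_mul]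
  simp
  rfl

theorem altD_branch {R : Type*} [CommRing R] {n : ℕ} (x : Fin (n+1) → R) (lam : Fin (n+1) → ℕ)
    (hl : Antitone lam) :
    altD x lam = (∏ i : Fin n, (x i.castSucc - x (Fin.last n))) *
      ∑ mu ∈ Fintype.piFinset (fun j : Fin n => Finset.Icc (lam j.succ) (lam j.castSucc)),
        (x (Fin.last n) ^ lam (Fin.last n) * ∏ j, x (Fin.last n) ^ (lam j.castSucc - mu j)) *
          altD (fun i => x i.castSucc) mu := by
  set y := x (Fin.last n) with hy
  let E : Fin (n+1) → Fin n → R := fun i j =>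
    ∑ m ∈ Finset.Icc (lam j.succ) (lam j.castSucc),
      y ^ (lam j.castSucc - m) * x i ^ (rhoPart n j + m)
  let B : Matrix (Fin (n+1)) (Fin (n+1)) R := Matrix.of fun i =>
    Fin.lastCases (x i ^ lam (Fin.last n)) (fun j => (x i - y) * E i j)
  have hA : altD x lam = B.det := by
    unfold altD
    refine det_col_succ _ _ (fun j => y ^ (lam j.castSucc - lam j.succ + 1)) ?_ ?_
    · intro i; simp [B, rhoPart]
    · intro i j
      have hle : lam j.succ ≤ lam j.castSucc := hl (Fin.castSucc_lt_succ).le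
      have := geom_id (x i) y _ _ hle
      have hE : E i j = x i ^ rhoPart n j * ∑ m ∈ Finset.Icc (lam j.succ) (lam j.castSucc),
          y ^ (lam j.castSucc - m) * x i ^ m := by
        simp only [E, Finset.mul_sum]
        refine Finset.sum_congr rfl fun m _ => ?_
        ring
      have e1 : rhoPart (n+1) j.castSucc = rhoPart n j + 1 := by
        have := j.2
        simp [rhoPart]; omega
      have e2 : rhoPart (n+1) j.succ = rhoPart n j := by
        simp [rhoPart]; omega
      simp only [B, Matrix.of_apply, Fin.lastCases_castSucc, hE, e1, e2]
      rw [mul_left_comm, ← this]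
      ring
  rw [hA, det_last_row]
  · have e : (Matrix.of fun i j : Fin n => B i.castSucc j.castSucc)
      = Matrix.of fun i j : Fin n => (x i.castSucc - y) * (Matrix.of fun i j : Fin n => E i.castSucc j) i j := by
      ext i j; simp [B]
    rw [e, Matrix.det_mul_column, mul_left_comm]
    congr 1
    have hB : B (Fin.last n) (Fin.last n) = y ^ lam (Fin.last n) := by simp [B, hy]
    rw [hB]
    have := (Matrix.detRowAlternating (n := Fin n) (R := R)).toMultilinearMap.map_sum_finset
      (fun j m => fun i : Fin n => y ^ (lam j.castSucc - m) * x i.castSucc ^ (rhoPart n j + m))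
      (fun j : Fin n => Finset.Icc (lam j.succ) (lam j.castSucc))
    rw [← Matrix.det_transpose]
    have e2 : (Matrix.of fun i j : Fin n => E i.castSucc j).transpose =
      (fun j : Fin n => ∑ m ∈ Finset.Icc (lam j.succ) (lam j.castSucc), fun i : Fin n => y ^ (lam j.castSucc - m) * x i.castSucc ^ (rhoPart n j + m)) := by
      ext j i
      simp [E, Matrix.transpose_apply]
    rw [e2]
    refine (congrArg _ this).trans ?_
    rw [Finset.mul_sum]
    refine Finset.sum_congr rfl fun mu _ => ?_
    rw [mul_assoc]
    congr 1
    unfold altD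
    rw [← Matrix.det_transpose, ← Matrix.det_mul_column]
    rfl
  · intro j; simp [B, hy]

theorem mem_cells' {n : ℕ} (lam : Fin n → ℕ) (i : Fin n) (k : ℕ) :
    (i, k) ∈ cells lam ↔ k < lam i := by
  unfold cells
  simp only [Finset.mem_filter, Finset.mem_product, Finset.mem_univ, Finset.mem_range, true_and]
  constructor
  · exact fun h => h.2
  · exact fun h => ⟨lt_of_lt_of_le h (Finset.le_sup (f := lam) (Finset.mem_univ i)), h⟩

theorem prod_cells {R : Type*} [CommRing R] {n : ℕ} (lam : Fin n → ℕ) (g : Fin n × ℕ → R) :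
    ∏ c : cells lam, g c = ∏ i, ∏ k ∈ Finset.range (lam i), g (i, k) := by
  rw [Finset.prod_coe_sort (cells lam) g]
  refine Finset.prod_finset_product _ _ _ ?_
  rintro ⟨i, k⟩
  simp [mem_cells']

noncomputable def schurG {R : Type*} [CommRing R] {n : ℕ} (x : Fin n → R) (lam : Fin n → ℕ) : R :=
  ∑ T ∈ Finset.univ.filter (IsSSYT lam), ∏ c : cells lam, x (T c)

/-- extension of a filling -/
noncomputable def extT {n : ℕ} {mu : Fin n → ℕ} (U : cells mu → Fin n) (p : Fin (n+1) × ℕ) :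
    Fin (n+1) :=
  Fin.lastCases (motive := fun _ => Fin (n+1)) (Fin.last n)
    (fun i => if h : (i, p.2) ∈ cells mu then (U ⟨(i, p.2), h⟩).castSucc else Fin.last n) p.1

theorem extT_last {n : ℕ} {mu : Fin n → ℕ} (U : cells mu → Fin n) (k : ℕ) :
    extT U (Fin.last n, k) = Fin.last n := by
  simp [extT]

theorem extT_in {n : ℕ} {mu : Fin n → ℕ} (U : cells mu → Fin n) (i : Fin n) (k : ℕ)
    (h : (i, k) ∈ cells mu) : extT U (i.castSucc, k) = (U ⟨(i, k), h⟩).castSucc := by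
  simp [extT, h]

theorem extT_out {n : ℕ} {mu : Fin n → ℕ} (U : cells mu → Fin n) (i : Fin n) (k : ℕ)
    (h : (i, k) ∉ cells mu) : extT U (i.castSucc, k) = Fin.last n := by
  simp [extT, h]

/-- the shape of the part of `T` not equal to the last letter -/
noncomputable def shp {n : ℕ} {lam : Fin (n+1) → ℕ} (T : cells lam → Fin (n+1)) (j : Fin n) : ℕ :=
  ((Finset.range (lam j.castSucc)).filter
    fun k => ∃ h : (j.castSucc, k) ∈ cells lam, T ⟨_, h⟩ ≠ Fin.last n).card

theorem lt_card_iff (S : Finset ℕ) (hS : ∀ a ∈ S, ∀ b, b ≤ a → b ∈ S) (k : ℕ) :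
    k ∈ S ↔ k < S.card := by
  have hlow : ∀ k, k ∈ S → k < S.card := by
    intro k hk
    have : Finset.range (k+1) ⊆ S := fun b hb => hS k hk b (by simp at hb; omega)
    simpa using Finset.card_le_card this
  refine ⟨hlow k, fun hk => ?_⟩
  by_contra hn
  have : S ⊆ Finset.range k := by
    intro a ha
    by_contra hc
    exact hn (hS a ha k (by simpa using hc))
  have := Finset.card_le_card this
  simp at this
  omega

theorem shp_iff {n : ℕ} {lam : Fin (n+1) → ℕ} {T : cells lam → Fin (n+1)} (hT : IsSSYT lam T)
    (j : Fin n) (k : ℕ) :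
    k < shp T j ↔ ∃ h : (j.castSucc, k) ∈ cells lam, T ⟨_, h⟩ ≠ Fin.last n := by
  unfold shp
  rw [← lt_card_iff]
  · simp only [Finset.mem_filter, Finset.mem_range, and_iff_right_iff_imp]
    rintro ⟨h, -⟩
    exact (mem_cells' _ _ _).1 h
  · intro a ha b hb
    simp only [Finset.mem_filter, Finset.mem_range] at ha ⊢
    obtain ⟨h1, h2, h3⟩ := ha
    refine ⟨by omega, (mem_cells' _ _ _).2 (by omega), ?_⟩
    have := hT.1 ⟨(j.castSucc, b), (mem_cells' _ _ _).2 (by omega)⟩ ⟨(j.castSucc, a), h2⟩ rfl hb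
    exact (lt_of_le_of_lt this (Fin.lt_last_iff_ne_last.2 h3)).ne

theorem shp_mem {n : ℕ} {lam : Fin (n+1) → ℕ} (hl : Antitone lam)
    {T : cells lam → Fin (n+1)} (hT : IsSSYT lam T) :
    shp T ∈ Fintype.piFinset (fun j : Fin n => Finset.Icc (lam j.succ) (lam j.castSucc)) := by
  rw [Fintype.mem_piFinset]
  intro j
  rw [Finset.mem_Icc]
  constructor
  · by_contra hc
    push Not at hc
    refine lt_irrefl _ ((shp_iff hT j (shp T j)).2 ?_)
    have h1 : (j.succ, shp T j) ∈ cells lam := (mem_cells' _ _ _).2 hc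
    have h2 : (j.castSucc, shp T j) ∈ cells lam :=
      (mem_cells' _ _ _).2 (hc.trans_le (hl Fin.castSucc_lt_succ.le))
    have := hT.2 ⟨_, h2⟩ ⟨_, h1⟩ rfl Fin.castSucc_lt_succ
    exact ⟨h2, (lt_of_lt_of_le this (Fin.le_last _)).ne⟩
  · by_contra hc
    push Not at hc
    obtain ⟨h, -⟩ := (shp_iff hT j _).1 hc
    exact lt_irrefl _ ((mem_cells' _ _ _).1 h)

theorem row_le {n : ℕ} {lam : Fin n → ℕ} (hl : Antitone lam)
    {T : cells lam → Fin n} (hT : IsSSYT lam T) (m k : ℕ) :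
    ∀ (hm : m < n) (h : (⟨m, hm⟩, k) ∈ cells lam), m ≤ (T ⟨_, h⟩ : ℕ) := by
  induction m with
  | zero => intros; omega
  | succ m ih =>
    intro hm h
    have hlt : (⟨m, by omega⟩ : Fin n) < ⟨m+1, hm⟩ := by simp
    have h' : ((⟨m, by omega⟩ : Fin n), k) ∈ cells lam :=
      (mem_cells' _ _ _).2 (((mem_cells' _ _ _).1 h).trans_le (hl hlt.le))
    have h1 := ih _ h'
    have h2 := hT.2 ⟨_, h'⟩ ⟨_, h⟩ rfl hlt
    rw [Fin.lt_def] at h2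
    omega

theorem ext_isSSYT {n : ℕ} {lam : Fin (n+1) → ℕ} {mu : Fin n → ℕ}
    (hmu : ∀ j : Fin n, lam j.succ ≤ mu j) (hl : Antitone lam)
    {U : cells mu → Fin n} (hU : IsSSYT mu U) :
    IsSSYT lam (fun c => extT U c) := by
  constructor
  · rintro ⟨⟨i, k⟩, hc⟩ ⟨⟨i', k'⟩, hd⟩ h1 h2
    simp only at h1 h2 ⊢
    subst h1
    induction i using Fin.lastCases with
    | last => simp [extT_last]
    | cast i =>
      by_cases h : (i, k') ∈ cells mu
      · have h' : (i, k) ∈ cells mu :=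
          (mem_cells' _ _ _).2 (lt_of_le_of_lt h2 ((mem_cells' _ _ _).1 h))
        rw [extT_in U i k h', extT_in U i k' h, Fin.castSucc_le_castSucc_iff]
        exact hU.1 ⟨_, h'⟩ ⟨_, h⟩ rfl h2
      · rw [extT_out U i k' h]; exact Fin.le_last _
  · rintro ⟨⟨i, k⟩, hc⟩ ⟨⟨i', k'⟩, hd⟩ h1 h2
    simp only at h1 h2 ⊢
    subst h1
    induction i using Fin.lastCases with
    | last => exact absurd (Fin.le_last i') (not_le.2 h2)
    | cast i =>
      have h' : (i, k) ∈ cells mu := by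
        rw [mem_cells'] at hd ⊢
        refine lt_of_lt_of_le hd ((hl ?_).trans (hmu i))
        rw [Fin.lt_def] at h2; rw [Fin.le_def]; simp at h2 ⊢; omega
      rw [extT_in U i k h']
      induction i' using Fin.lastCases with
      | last => rw [extT_last]; exact Fin.castSucc_lt_last _
      | cast i' =>
        by_cases h : (i', k) ∈ cells mu
        · rw [extT_in U i' k h, Fin.castSucc_lt_castSucc_iff]
          exact hU.2 ⟨_, h'⟩ ⟨_, h⟩ rfl (by simpa using h2)
        · rw [extT_out U i' k h]; exact Fin.castSucc_lt_last _

theorem shp_ext {n : ℕ} {lam : Fin (n+1) → ℕ} {mu : Fin n → ℕ}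
    (hmu : ∀ j : Fin n, mu j ≤ lam j.castSucc)
    (U : cells mu → Fin n) :
    shp (lam := lam) (fun c => extT U c) = mu := by
  funext j
  unfold shp
  have : ((Finset.range (lam j.castSucc)).filter
    fun k => ∃ h : (j.castSucc, k) ∈ cells lam,
      (fun c : cells lam => extT U c) ⟨_, h⟩ ≠ Fin.last n) = Finset.range (mu j) := by
    ext k
    simp only [Finset.mem_filter, Finset.mem_range]
    constructor
    · rintro ⟨h1, h2, h3⟩
      by_contra hc
      exact h3 (extT_out U j k (by rwa [mem_cells']))
    · intro h
      have h' := h.trans_le (hmu j)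
      refine ⟨h', (mem_cells' _ _ _).2 h', ?_⟩
      rw [extT_in U j k ((mem_cells' _ _ _).2 h)]
      exact (Fin.castSucc_lt_last _).ne
  rw [this, Finset.card_range]

theorem weight_ext {R : Type*} [CommRing R] {n : ℕ} (x : Fin (n+1) → R) {lam : Fin (n+1) → ℕ}
    {mu : Fin n → ℕ} (hmu : ∀ j : Fin n, mu j ≤ lam j.castSucc) (U : cells mu → Fin n) :
    ∏ c : cells lam, x (extT U c) =
      (x (Fin.last n) ^ lam (Fin.last n) * ∏ j, x (Fin.last n) ^ (lam j.castSucc - mu j)) *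
        ∏ c : cells mu, x (U c).castSucc := by
  have e : ∏ c : cells mu, x (U c).castSucc
      = ∏ c : cells mu, (fun p : Fin n × ℕ => x (extT U (p.1.castSucc, p.2))) c := by
    refine Finset.prod_congr rfl fun c _ => ?_
    obtain ⟨⟨i, k⟩, h⟩ := c
    simp only [extT_in U i k h]
  rw [e, prod_cells mu (fun p => x (extT U (p.1.castSucc, p.2))),
    prod_cells lam (fun p => x (extT U p)), Fin.prod_univ_castSucc]
  simp only [extT_last, Finset.prod_const, Finset.card_range]
  rw [mul_comm, mul_assoc, ← Finset.prod_mul_distrib]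
  congr 1
  refine Finset.prod_congr rfl fun j _ => ?_
  rw [← Finset.prod_range_mul_prod_Ico _ (hmu j), mul_comm]
  congr 1
  rw [Finset.prod_congr rfl (g := fun _ => x (Fin.last n)), Finset.prod_const, Nat.card_Ico]
  intro k hk
  rw [Finset.mem_Ico] at hk
  rw [extT_out]
  rw [mem_cells']; omega

theorem schurG_branch {R : Type*} [CommRing R] {n : ℕ} (x : Fin (n+1) → R) (lam : Fin (n+1) → ℕ)
    (hl : Antitone lam) :
    schurG x lam =
      ∑ mu ∈ Fintype.piFinset (fun j : Fin n => Finset.Icc (lam j.succ) (lam j.castSucc)),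
        (x (Fin.last n) ^ lam (Fin.last n) * ∏ j, x (Fin.last n) ^ (lam j.castSucc - mu j)) *
          schurG (fun i => x i.castSucc) mu := by
  unfold schurG
  rw [← Finset.sum_fiberwise_of_maps_to (g := shp)
    (t := Fintype.piFinset (fun j : Fin n => Finset.Icc (lam j.succ) (lam j.castSucc)))]
  swap
  · intro T hT
    exact shp_mem hl (by simpa using hT)
  refine Finset.sum_congr rfl fun mu hmu => ?_
  rw [Fintype.mem_piFinset] at hmu
  have hmu1 : ∀ j : Fin n, lam j.succ ≤ mu j := fun j => (Finset.mem_Icc.1 (hmu j)).1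
  have hmu2 : ∀ j : Fin n, mu j ≤ lam j.castSucc := fun j => (Finset.mem_Icc.1 (hmu j)).2
  rw [Finset.mul_sum]
  symm
  refine Finset.sum_bij (fun U _ => fun c => extT U c) ?_ ?_ ?_ ?_
  · intro U hU
    simp only [Finset.mem_filter, Finset.mem_univ, true_and] at hU ⊢
    exact ⟨ext_isSSYT hmu1 hl hU, shp_ext hmu2 U⟩
  · intro U _ V _ h
    funext c
    obtain ⟨⟨i, k⟩, hc⟩ := c
    have hc' : (i.castSucc, k) ∈ cells lam :=
      (mem_cells' _ _ _).2 (((mem_cells' _ _ _).1 hc).trans_le (hmu2 i))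
    have := congrFun h ⟨_, hc'⟩
    simp only [extT_in _ i k hc] at this
    exact Fin.castSucc_injective _ this
  · intro T hT
    simp only [Finset.mem_filter, Finset.mem_univ, true_and] at hT
    obtain ⟨hT, rfl⟩ := hT
    have key : ∀ c : cells (shp T), ∃ a : Fin n, ∃ h : (c.1.1.castSucc, c.1.2) ∈ cells lam,
        T ⟨_, h⟩ = a.castSucc := by
      rintro ⟨⟨i, k⟩, hc⟩
      obtain ⟨h, h'⟩ := (shp_iff hT i k).1 ((mem_cells' _ _ _).1 hc)
      exact ⟨(T ⟨_, h⟩).castPred h', h, by simp⟩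
    choose U hU1 hU2 using key
    refine ⟨U, ?_, ?_⟩
    · simp only [Finset.mem_filter, Finset.mem_univ, true_and]
      constructor
      · intro c d h1 h2
        rw [← Fin.castSucc_le_castSucc_iff, ← hU2, ← hU2]
        exact hT.1 _ _ (by simp [h1]) h2
      · intro c d h1 h2
        rw [← Fin.castSucc_lt_castSucc_iff, ← hU2, ← hU2]
        exact hT.2 _ _ h1 (by simpa using h2)
    · funext c
      obtain ⟨⟨i, k⟩, hc⟩ := c
      induction i using Fin.lastCases with
      | last =>
        simp only [extT_last]
        have := row_le hl hT n k (by omega) hc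
        refine le_antisymm ?_ (Fin.le_last _)
        rw [Fin.le_def]; exact this
      | cast i =>
        by_cases h : (i, k) ∈ cells (shp T)
        · simp only [extT_in U i k h]
          exact (hU2 ⟨_, h⟩).symm
        · simp only [extT_out U i k h]
          by_contra hne
          exact h ((mem_cells' _ _ _).2 ((shp_iff hT i k).2 ⟨hc, Ne.symm hne⟩))
  · intro U _
    exact (weight_ext x hmu2 U).symm

theorem bialt_gen {R : Type*} [CommRing R] (n : ℕ) : ∀ (x : Fin n → R) (lam : Fin n → ℕ),
    Antitone lam → altD x (fun _ => 0) * schurG x lam = altD x lam := by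
  induction n with
  | zero =>
    intro x lam _
    have : IsEmpty (cells lam) := ⟨fun c => c.1.1.elim0⟩
    have h : Finset.univ.filter (IsSSYT lam) = Finset.univ := by
      refine Finset.filter_true_of_mem fun T _ => ?_
      exact ⟨fun c => isEmptyElim c, fun c => isEmptyElim c⟩
    unfold schurG
    rw [h]
    simp [altD]
  | succ n ih =>
    intro x lam hl
    rw [altD_branch x lam hl, altD_branch x (fun _ => 0) (fun _ _ _ => le_rfl),
      schurG_branch x lam hl]
    have h0 : Fintype.piFinset (fun _ : Fin n => Finset.Icc 0 0) = {fun _ => 0} := by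
      simp
    rw [h0, Finset.sum_singleton, mul_assoc]
    congr 1
    simp only [pow_zero, Nat.sub_self, Finset.prod_const_one, one_mul]
    rw [Finset.mul_sum]
    refine Finset.sum_congr rfl fun mu hmu => ?_
    rw [Fintype.mem_piFinset] at hmu
    have hmu1 : ∀ j : Fin n, lam j.succ ≤ mu j := fun j => (Finset.mem_Icc.1 (hmu j)).1
    have hmu2 : ∀ j : Fin n, mu j ≤ lam j.castSucc := fun j => (Finset.mem_Icc.1 (hmu j)).2
    have hm : Antitone mu := by
      intro i j hij
      rcases hij.eq_or_lt with rfl | h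
      · exact le_rfl
      · exact (hmu2 j).trans ((hl (Fin.succ_le_castSucc_iff.2 h)).trans (hmu1 i))
    rw [mul_left_comm, ih _ mu hm]

/-- Corollary 3.4, the bialternant formula:
`a_ρ(x) · s_λ(x) = a_{ρ+λ}(x)`. -/
theorem bialternant_formula (n : ℕ) (hn : 1 ≤ n)
    (lam : Fin n → ℕ) (hlam : IsPartition lam) :
    avandX n (rhoPart n) * schurX n lam
      = avandX n (fun j => rhoPart n j + lam j) := by
  exact bialt_gen n X lam hlam
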